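/- Let n ∈ ℕ, let q be a nonzero complex number with q^j ≠ 1 for all 1 ≤ j ≤ 2n, and let c : ℤ → ℂ be an arbitrary function. Using the convention that 1/(q;q)_j = 0 whenever j < 0 (so all sums below are finite), one has Σ_{k∈ℤ} c(k) / ((q;q)_{n−k}·(q;q)_{n+k}) = Σ_{j=0}^n (q^{j²}/(q;q)_{n−j}) · Σ_{k∈ℤ} c(k)·q^{−k²} / ((q;q)_{j−k}·(q;q)_{j+k}). -/

import Mathlib

/-- The finite q-Pochhammer symbol `(x;q)_n = ∏_{i=1}^n (1 - x q^{i-1})`. -/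
noncomputable def qPoch (q x : ℂ) (n : ℕ) : ℂ := ∏ i ∈ Finset.range n, (1 - x * q ^ i)

/-- `1/(q;q)_j` for `j : ℤ`, with the convention that it is `0` for `j < 0`. -/
noncomputable def invPoch (q : ℂ) (j : ℤ) : ℂ :=
  if 0 ≤ j then (qPoch q q j.toNat)⁻¹ else 0

/-!
Multiplying `∑ i, x^i q^(i²) / ((q;q)_(N-i) (q;q)_i (xq;q)_i) = 1 / ((q;q)_N (xq;q)_N)` by `(q;q)_N`
gives the Durfee square dissection of the partitions into parts of size at most `N`, with `x`
marking the number of parts. Taking `x = q^(2m)` and shifting `j = m + i` shows that the matrix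
`1 / ((q;q)_(j-k) (q;q)_(j+k))` reproduces itself under the weights `q^(j² - k²) / (q;q)_(n-j)`, for
`k = m ≥ 0` and then, by evenness in `k`, for all `k`. Pairing with `c k` and interchanging the two
finitely supported sums finishes the proof.
-/

section QPochhammer

variable (q x : ℂ)

lemma qPoch_succ (n : ℕ) : qPoch q x (n + 1) = qPoch q x n * (1 - x * q ^ n) :=
  Finset.prod_range_succ _ _

lemma qPoch_add (m n : ℕ) : qPoch q x (m + n) = qPoch q x m * qPoch q (x * q ^ m) n := by
  simp only [qPoch, Finset.prod_range_add, pow_add, mul_assoc]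

lemma qPoch_succ_left (n : ℕ) : qPoch q x (n + 1) = (1 - x) * qPoch q (x * q) n := by
  rw [add_comm, qPoch_add]
  simp [qPoch]

lemma qPoch_self_succ (n : ℕ) : qPoch q q (n + 1) = qPoch q q n * (1 - q ^ (n + 1)) := by
  rw [qPoch_succ, pow_succ']

variable {q x}

lemma qPoch_ne_zero_of_le {m n : ℕ} (hmn : m ≤ n) (h : qPoch q x n ≠ 0) : qPoch q x m ≠ 0 := by
  obtain ⟨d, rfl⟩ := Nat.exists_eq_add_of_le hmn
  rw [qPoch_add] at h
  exact left_ne_zero_of_mul h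

lemma qPoch_self_ne_zero {n : ℕ} (h : ∀ j : ℕ, 1 ≤ j → j ≤ n → q ^ j ≠ 1) : qPoch q q n ≠ 0 := by
  refine Finset.prod_ne_zero_iff.mpr fun i hi => ?_
  rw [← pow_succ', sub_ne_zero]
  exact (h (i + 1) i.succ_pos (Finset.mem_range.mp hi)).symm

end QPochhammer

section Durfee

open Finset.HasAntidiagonal (antidiagonal mem_antidiagonal)

variable (q x : ℂ)

/-- The summand of the Durfee square identity for parts of size at most `i + d`, divided by
`(q;q)_(i+d)`: `i` is the side of the square, and `d` bounds the excess of the parts over it. -/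
noncomputable def durfeeTerm (i d : ℕ) : ℂ :=
  x ^ i * q ^ (i ^ 2) / (qPoch q q d * qPoch q q i * qPoch q (x * q) i)

variable {q x}

lemma durfeeTerm_recurrence {i d : ℕ} (hi : qPoch q q (i + 1) ≠ 0) (hd : qPoch q q (d + 1) ≠ 0)
    (hx : qPoch q (x * q) (i + 1) ≠ 0) :
    (1 - q ^ (i + 1)) * durfeeTerm q x (i + 1) d
        + q ^ i * ((1 - q ^ (d + 1)) * durfeeTerm q x i (d + 1))
      = durfeeTerm q (x * q) i d / (1 - x * q) := by
  have hx_left := qPoch_succ_left q (x * q) i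
  have hx_right := qPoch_succ q (x * q) i
  have hrhs : durfeeTerm q (x * q) i d / (1 - x * q)
      = (x * q) ^ i * q ^ (i ^ 2) / (qPoch q q d * qPoch q q i * qPoch q (x * q) (i + 1)) := by
    rw [durfeeTerm, hx_left, div_div]
    congr 1
    ring
  rw [hrhs]
  simp only [durfeeTerm, qPoch_self_succ, hx_right] at hi hd hx ⊢
  obtain ⟨hi₀, hi₁⟩ := mul_ne_zero_iff.mp hi
  obtain ⟨hd₀, hd₁⟩ := mul_ne_zero_iff.mp hd
  obtain ⟨hx₀, hx₁⟩ := mul_ne_zero_iff.mp hx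
  field_simp
  ring

lemma sum_durfeeTerm_succ {N : ℕ} (hq : qPoch q q (N + 1) ≠ 0)
    (hx : qPoch q (x * q) (N + 1) ≠ 0) :
    (1 - q ^ (N + 1)) * ∑ p ∈ antidiagonal (N + 1), durfeeTerm q x p.1 p.2
      = (∑ p ∈ antidiagonal N, durfeeTerm q (x * q) p.1 p.2) / (1 - x * q) := by
  have hsplit : ∀ p ∈ antidiagonal (N + 1), (1 - q ^ (N + 1)) * durfeeTerm q x p.1 p.2
      = (1 - q ^ p.1) * durfeeTerm q x p.1 p.2
        + q ^ p.1 * ((1 - q ^ p.2) * durfeeTerm q x p.1 p.2) := by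
    intro p hp
    rw [← mem_antidiagonal.mp hp, pow_add]
    ring
  rw [Finset.mul_sum, Finset.sum_congr rfl hsplit, Finset.sum_add_distrib,
    Finset.Nat.sum_antidiagonal_succ, Finset.Nat.sum_antidiagonal_succ']
  simp only [pow_zero, sub_self, zero_mul, mul_zero, zero_add]
  rw [← Finset.sum_add_distrib, Finset.sum_div]
  refine Finset.sum_congr rfl fun p hp => ?_
  have hpN : p.1 + p.2 = N := mem_antidiagonal.mp hp
  exact durfeeTerm_recurrence (qPoch_ne_zero_of_le (by lia) hq)
    (qPoch_ne_zero_of_le (by lia) hq) (qPoch_ne_zero_of_le (by lia) hx)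

theorem sum_durfeeTerm {N : ℕ} (hq : qPoch q q N ≠ 0) (hx : qPoch q (x * q) N ≠ 0) :
    ∑ p ∈ antidiagonal N, durfeeTerm q x p.1 p.2
      = 1 / (qPoch q q N * qPoch q (x * q) N) := by
  induction N generalizing x with
  | zero => simp [durfeeTerm, qPoch]
  | succ N ih =>
    have hstep := sum_durfeeTerm_succ hq hx
    rw [qPoch_self_succ] at hq ⊢
    rw [qPoch_succ_left] at hx ⊢
    obtain ⟨hqN, hq₁⟩ := mul_ne_zero_iff.mp hq
    obtain ⟨hx₁, hxN⟩ := mul_ne_zero_iff.mp hx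
    apply mul_left_cancel₀ hq₁
    rw [hstep, ih hqN hxN]
    field_simp

theorem sum_bailey_kernel {N : ℕ} (m : ℕ) (hq : qPoch q q N ≠ 0)
    (hx : qPoch q (x * q) (2 * m + N) ≠ 0) :
    ∑ p ∈ antidiagonal N, x ^ (m + p.1) * q ^ ((m + p.1) ^ 2) /
        (qPoch q q p.2 * qPoch q q p.1 * qPoch q (x * q) (2 * m + p.1))
      = x ^ m * q ^ (m ^ 2) / (qPoch q q N * qPoch q (x * q) (2 * m + N)) := by
  have hshift (i : ℕ) : qPoch q (x * q) (2 * m + i)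
      = qPoch q (x * q) (2 * m) * qPoch q (x * q ^ (2 * m) * q) i := by
    rw [qPoch_add, mul_right_comm]
  have hx' : qPoch q (x * q ^ (2 * m) * q) N ≠ 0 := right_ne_zero_of_mul (hshift N ▸ hx)
  have hdurfee := congrArg (x ^ m * q ^ (m ^ 2) / qPoch q (x * q) (2 * m) * ·)
    (sum_durfeeTerm hq hx')
  simp only [hshift]
  convert hdurfee using 1
  · rw [Finset.mul_sum]
    refine Finset.sum_congr rfl fun p _ => ?_
    rw [durfeeTerm, div_mul_div_comm]
    congr 1 <;> ring
  · rw [div_mul_div_comm]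
    congr 1 <;> ring

end Durfee

section BaileyMatrix

variable (q : ℂ)

lemma invPoch_natCast (n : ℕ) : invPoch q n = (qPoch q q n)⁻¹ := by
  simp [invPoch]

lemma invPoch_of_neg {j : ℤ} (hj : j < 0) : invPoch q j = 0 :=
  if_neg hj.not_ge

/-- The matrix `1 / ((q;q)_(j-k) (q;q)_(j+k))` which relates the two sequences of a Bailey pair
(relative to `1`), extended from `0 ≤ k ≤ j` to all integers `k`. -/
noncomputable def baileyMatrix (j : ℕ) (k : ℤ) : ℂ :=
  invPoch q (j - k) * invPoch q (j + k)

lemma baileyMatrix_neg (j : ℕ) (k : ℤ) : baileyMatrix q j (-k) = baileyMatrix q j k := by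
  rw [baileyMatrix, baileyMatrix, sub_neg_eq_add, ← sub_eq_add_neg, mul_comm]

lemma baileyMatrix_natAbs (j : ℕ) (k : ℤ) :
    baileyMatrix q j k.natAbs = baileyMatrix q j k := by
  rcases Int.natAbs_eq k with hk | hk
  · rw [← hk]
  · conv_rhs => rw [hk, baileyMatrix_neg]

lemma baileyMatrix_eq_zero_of_lt {j : ℕ} {k : ℤ} (h : j < k.natAbs) :
    baileyMatrix q j k = 0 := by
  rw [← baileyMatrix_natAbs, baileyMatrix, invPoch_of_neg q (by lia), zero_mul]

lemma baileyMatrix_add_left (m i : ℕ) :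
    baileyMatrix q (m + i) m = (qPoch q q i * qPoch q q (2 * m + i))⁻¹ := by
  have hsub : ((m + i : ℕ) : ℤ) - m = i := by lia
  have hadd : ((m + i : ℕ) : ℤ) + m = (2 * m + i : ℕ) := by lia
  rw [baileyMatrix, hsub, hadd, invPoch_natCast, invPoch_natCast, mul_inv]

lemma summable_mul_baileyMatrix (f : ℤ → ℂ) (j : ℕ) :
    Summable fun k => f k * baileyMatrix q j k := by
  refine summable_of_ne_finset_zero (s := Finset.Icc (-(j : ℤ)) j) fun k hk => ?_
  rw [Finset.mem_Icc] at hk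
  rw [baileyMatrix_eq_zero_of_lt q (by lia), mul_zero]

variable {q}

lemma sum_baileyMatrix_natCast {n m : ℕ} (hmn : m ≤ n) (hq : qPoch q q (n + m) ≠ 0) :
    ∑ j ∈ Finset.range (n + 1), q ^ (j ^ 2) / qPoch q q (n - j) * baileyMatrix q j m
      = q ^ (m ^ 2) * baileyMatrix q n m := by
  obtain ⟨N, rfl⟩ := Nat.exists_eq_add_of_le hmn
  have hbelow : ∑ j ∈ Finset.range m,
      q ^ (j ^ 2) / qPoch q q (m + N - j) * baileyMatrix q j m = 0 :=
    Finset.sum_eq_zero fun j hj => by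
      rw [baileyMatrix_eq_zero_of_lt q (by simpa using hj), mul_zero]
  have hkernel := sum_bailey_kernel (q := q) (x := 1) (N := N) m
    (qPoch_ne_zero_of_le (by lia) hq) (by convert hq using 2 <;> ring)
  simp only [one_pow, one_mul] at hkernel
  rw [Finset.Nat.sum_antidiagonal_eq_sum_range_succ (fun i d => q ^ ((m + i) ^ 2) /
    (qPoch q q d * qPoch q q i * qPoch q q (2 * m + i)))] at hkernel
  rw [add_assoc, Finset.sum_range_add, hbelow, zero_add, baileyMatrix_add_left,
    ← div_eq_mul_inv, ← hkernel]
  refine Finset.sum_congr rfl fun i _ => ?_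
  rw [baileyMatrix_add_left, Nat.add_sub_add_left, ← div_eq_mul_inv, div_div, mul_assoc]

theorem sum_baileyMatrix (hq₀ : q ≠ 0) {n : ℕ} (hq : qPoch q q (2 * n) ≠ 0) (k : ℤ) :
    ∑ j ∈ Finset.range (n + 1),
        q ^ (j ^ 2) / qPoch q q (n - j) * (q ^ (-(k ^ 2)) * baileyMatrix q j k)
      = baileyMatrix q n k := by
  rcases le_or_gt k.natAbs n with hk | hk
  · have hsum := sum_baileyMatrix_natCast hk (qPoch_ne_zero_of_le (by lia) hq)
    have hpow : q ^ (k.natAbs ^ 2) = q ^ (k ^ 2) := by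
      rw [← zpow_natCast, Nat.cast_pow, Int.natAbs_sq]
    simp only [baileyMatrix_natAbs, hpow] at hsum
    simp only [mul_left_comm _ (q ^ (-(k ^ 2)))]
    rw [← Finset.mul_sum, hsum, zpow_neg, inv_mul_cancel_left₀ (zpow_ne_zero _ hq₀)]
  · rw [baileyMatrix_eq_zero_of_lt q hk]
    refine Finset.sum_eq_zero fun j hj => ?_
    rw [Finset.mem_range] at hj
    rw [baileyMatrix_eq_zero_of_lt q (by lia), mul_zero, mul_zero]

end BaileyMatrix

theorem stmt_14 (n : ℕ) (q : ℂ) (hq0 : q ≠ 0)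
    (hq : ∀ j : ℕ, 1 ≤ j → j ≤ 2 * n → q ^ j ≠ 1)
    (c : ℤ → ℂ) :
    ∑' k : ℤ, c k * invPoch q ((n : ℤ) - k) * invPoch q ((n : ℤ) + k)
      = ∑ j ∈ Finset.range (n + 1),
          q ^ (j ^ 2) / qPoch q q (n - j) *
            ∑' k : ℤ, c k * q ^ (-(k ^ 2)) * invPoch q ((j : ℤ) - k) * invPoch q ((j : ℤ) + k) := by
  have hpoch : qPoch q q (2 * n) ≠ 0 := qPoch_self_ne_zero hq
  simp only [mul_assoc]
  calc ∑' k : ℤ, c k * baileyMatrix q n k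
      = ∑' k : ℤ, ∑ j ∈ Finset.range (n + 1),
          q ^ (j ^ 2) / qPoch q q (n - j) * (c k * (q ^ (-(k ^ 2)) * baileyMatrix q j k)) :=
        tsum_congr fun k => by
          simp only [mul_left_comm _ (c k), ← Finset.mul_sum, sum_baileyMatrix hq0 hpoch]
    _ = ∑ j ∈ Finset.range (n + 1), ∑' k : ℤ,
          q ^ (j ^ 2) / qPoch q q (n - j) * (c k * (q ^ (-(k ^ 2)) * baileyMatrix q j k)) :=
        Summable.tsum_finsetSum fun j _ => Summable.mul_left _ <| by
          simpa only [mul_assoc] using summable_mul_baileyMatrix q (fun k => c k * q ^ (-(k ^ 2))) j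
    _ = ∑ j ∈ Finset.range (n + 1), q ^ (j ^ 2) / qPoch q q (n - j) *
          ∑' k : ℤ, c k * (q ^ (-(k ^ 2)) * baileyMatrix q j k) := by
        simp only [tsum_mul_left]
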